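/- arXiv:2304.01840 — 3 statements merged into one kernel-verified Lean document; each statement's English description precedes it below -/
import Mathlib

section
/- Fix S ⊆ N and j ∉ S, let T := S ∪ {j} and a := A^S_{jj} (so a ≠ 0). Then the marginal workloads update under the pivot as: w_i^T = w_i^S + (w_j^S / a) A^S_{ij} for i ∈ S; w_j^T = w_j^S / a; and w_i^T = w_i^S − (w_j^S / a) A^S_{ij} for i ∉ T. The same three relations hold with the marginal rewards r in place of the marginal workloads w. (Table 4 of the paper.) -/
open Matrix BigOperators
open scoped Classical

noncomputable section

/-- Transition matrix of the `S`-active policy: row `i` of `P` if `i ∈ S`,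
the `i`-th standard unit row otherwise. -/
def PAct {N : Type*} [DecidableEq N] (P : Matrix N N ℝ) (S : Finset N) : Matrix N N ℝ :=
  fun i j => if i ∈ S then P i j else if i = j then 1 else 0

/-- Transition matrix of the `Sᶜ`-active policy. -/
def PPas {N : Type*} [DecidableEq N] (P : Matrix N N ℝ) (S : Finset N) : Matrix N N ℝ :=
  fun i j => if i ∈ S then (if i = j then 1 else 0) else P i j

/-- Basis matrix `B^S = I - β P^S`. -/
def BMat {N : Type*} [Fintype N] [DecidableEq N] (β : ℝ) (P : Matrix N N ℝ) (S : Finset N) :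
    Matrix N N ℝ := 1 - β • PAct P S

/-- Non-basic matrix `N^S = I - β P^{Sᶜ}`. -/
def NMat {N : Type*} [Fintype N] [DecidableEq N] (β : ℝ) (P : Matrix N N ℝ) (S : Finset N) :
    Matrix N N ℝ := 1 - β • PPas P S

/-- Basis inverse `H^S = (B^S)⁻¹`. -/
def HMat {N : Type*} [Fintype N] [DecidableEq N] (β : ℝ) (P : Matrix N N ℝ) (S : Finset N) :
    Matrix N N ℝ := (BMat β P S)⁻¹

/-- Tableau matrix `A^S = N^S · H^S`. -/
def AMat {N : Type*} [Fintype N] [DecidableEq N] (β : ℝ) (P : Matrix N N ℝ) (S : Finset N) :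
    Matrix N N ℝ := NMat β P S * HMat β P S

/-- Work measure `g^S = H^S · 1_S`. -/
def gWork {N : Type*} [Fintype N] [DecidableEq N] (β : ℝ) (P : Matrix N N ℝ) (S : Finset N) :
    N → ℝ := (HMat β P S).mulVec (fun j => if j ∈ S then 1 else 0)

/-- Reward measure `f^S = H^S · (R·1_S)`. -/
def fRew {N : Type*} [Fintype N] [DecidableEq N] (β : ℝ) (P : Matrix N N ℝ) (R : N → ℝ)
    (S : Finset N) : N → ℝ := (HMat β P S).mulVec (fun j => if j ∈ S then R j else 0)

/-- Marginal work `w_i^S`. -/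
def wMarg {N : Type*} [Fintype N] [DecidableEq N] (β : ℝ) (P : Matrix N N ℝ) (S : Finset N)
    (i : N) : ℝ :=
  if i ∈ S then (1 - β) * gWork β P S i
  else 1 + β * ∑ j ∈ S, P i j * gWork β P S j

/-- Marginal reward `r_i^S`. -/
def rMarg {N : Type*} [Fintype N] [DecidableEq N] (β : ℝ) (P : Matrix N N ℝ) (R : N → ℝ)
    (S : Finset N) (i : N) : ℝ :=
  if i ∈ S then (1 - β) * fRew β P R S i
  else R i + β * ∑ j ∈ S, P i j * fRew β P R S j

/-- Marginal productivity rate `ν_i^S = r_i^S / w_i^S`. -/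
def nuMarg {N : Type*} [Fintype N] [DecidableEq N] (β : ℝ) (P : Matrix N N ℝ) (R : N → ℝ)
    (S : Finset N) (i : N) : ℝ := rMarg β P R S i / wMarg β P S i

/-- Feasibility of a pair of row vectors `(x⁰, x¹)` for initial state `i`:
`x⁰, x¹ ≥ 0` and `(1-β) x⁰ + x¹ (I - β P) = e_i`. -/
def Feasible {N : Type*} [Fintype N] [DecidableEq N] (β : ℝ) (P : Matrix N N ℝ) (i : N)
    (x0 x1 : N → ℝ) : Prop :=
  (∀ j, 0 ≤ x0 j) ∧ (∀ j, 0 ≤ x1 j) ∧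
    (1 - β) • x0 + Matrix.vecMul x1 (1 - β • P) = Pi.single i 1

/-- Modified reward vector `R̂ = R - (I - βP)·Q`. -/
def Rhat {N : Type*} [Fintype N] [DecidableEq N] (β : ℝ) (P : Matrix N N ℝ) (R Q : N → ℝ) :
    N → ℝ := fun i => R i - ((1 - β • P).mulVec Q) i

/-!
Passing from `S` to `T = S ∪ {j}` swaps the `j`-th rows of `B^S` and `N^S`, so the linear system
`B^S f^S = R·1_S` changes in its `j`-th equation only. Cramer's rule gives
`det B^T = det B^S * A^S_{jj}`, hence `A^S_{jj} ≠ 0`, and solving the changed system gives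
`f^T = f^S + (r_j^S / A^S_{jj}) H^S e_j`. Since `r_i^S` is `(N^S f^S)_i` for `i ∈ S` and
`R_i - (N^S f^S)_i` for `i ∉ S`, and `N^S H^S e_j` is the `j`-th column of `A^S`, the rules for
`i ≠ j` follow by applying `N^S`; for `i = j` the relevant row of `N^T` is the `j`-th row of `B^S`,
and `B^S H^S e_j = e_j`. Workloads are the rewards for `R = 1`.
-/

section RowUpdate

variable {n : Type*} [Fintype n] [DecidableEq n]

theorem isUnit_det_one_sub_of_sum_norm_lt_one {K : Type*} [NormedField K] {M : Matrix n n K}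
    (hM : ∀ i, ∑ j, ‖M i j‖ < 1) : IsUnit (1 - M).det := by
  refine isUnit_iff_ne_zero.2 (det_ne_zero_of_sum_row_lt_diag fun i => ?_)
  have off_diag : ∑ j ∈ Finset.univ.erase i, ‖(1 - M) i j‖ =
      ∑ j ∈ Finset.univ.erase i, ‖M i j‖ :=
    Finset.sum_congr rfl fun j hj => by
      rw [Matrix.sub_apply, one_apply_ne (Finset.ne_of_mem_erase hj).symm, zero_sub, norm_neg]
  calc ∑ j ∈ Finset.univ.erase i, ‖(1 - M) i j‖
      < 1 - ‖M i i‖ := by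
        rw [off_diag]
        linarith [hM i, Finset.add_sum_erase _ (fun j => ‖M i j‖) (Finset.mem_univ i)]
    _ ≤ ‖(1 - M) i i‖ := by
        simpa only [Matrix.sub_apply, one_apply_eq, norm_one] using norm_sub_norm_le (1 : K) (M i i)

theorem det_updateRow_eq_det_mul_vecMul_inv {R : Type*} [CommRing R] {A : Matrix n n R}
    (hA : IsUnit A.det) (j : n) (u : n → R) :
    (A.updateRow j u).det = A.det * (u ᵥ* A⁻¹) j := by
  rw [← cramer_transpose_apply, ← det_smul_inv_vecMul_eq_cramer_transpose A u hA, Pi.smul_apply,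
    smul_eq_mul]

theorem updateRow_inv_mulVec_update {K : Type*} [Field K] {A : Matrix n n K} {j : n} {u : n → K}
    (hA : IsUnit A.det) (hA' : IsUnit (A.updateRow j u).det) (b : n → K) (t : K) :
    (A.updateRow j u)⁻¹ *ᵥ Function.update b j t =
      A⁻¹ *ᵥ b + ((t - u ⬝ᵥ A⁻¹ *ᵥ b) / (u ᵥ* A⁻¹) j) • A⁻¹.col j := by
  have pivot_ne_zero : (u ᵥ* A⁻¹) j ≠ 0 :=
    right_ne_zero_of_mul (det_updateRow_eq_det_mul_vecMul_inv hA j u ▸ hA'.ne_zero)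
  set c := (t - u ⬝ᵥ A⁻¹ *ᵥ b) / (u ᵥ* A⁻¹) j with hc
  have mulVec_old : A *ᵥ (A⁻¹ *ᵥ b + c • A⁻¹.col j) = b + c • Pi.single j 1 := by
    rw [← mulVec_single_one, mulVec_add, mulVec_smul, mulVec_mulVec, mulVec_mulVec,
      mul_nonsing_inv _ hA, one_mulVec, one_mulVec]
  have dotProduct_new : u ⬝ᵥ (A⁻¹ *ᵥ b + c • A⁻¹.col j) = t := by
    have hcol : u ⬝ᵥ A⁻¹.col j = (u ᵥ* A⁻¹) j := rfl
    rw [dotProduct_add, dotProduct_smul, hcol, smul_eq_mul, hc, div_mul_cancel₀ _ pivot_ne_zero,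
      add_sub_cancel]
  have solves : A.updateRow j u *ᵥ (A⁻¹ *ᵥ b + c • A⁻¹.col j) = Function.update b j t := by
    rw [updateRow_mulVec, mulVec_old, dotProduct_new]
    ext i
    rcases eq_or_ne i j with rfl | hij
    · simp only [Function.update_self]
    · simp [hij]
  rw [← solves, mulVec_mulVec, nonsing_inv_mul _ hA', one_mulVec]

end RowUpdate

section Tableau

variable {N : Type*} [Fintype N] [DecidableEq N] {P : Matrix N N ℝ} {β : ℝ} {S : Finset N}
  {i j : N}

theorem isUnit_det_BMat (hP : ∀ i, ∑ j, |P i j| ≤ 1) (hβ : |β| < 1) (S : Finset N) :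
    IsUnit (BMat β P S).det := by
  refine isUnit_det_one_sub_of_sum_norm_lt_one fun i => ?_
  have sum_abs_PAct_le_one : ∑ j, |PAct P S i j| ≤ 1 := by
    by_cases hi : i ∈ S
    · simpa only [PAct, if_pos hi] using hP i
    · simp [PAct, hi, apply_ite]
  calc ∑ j, ‖(β • PAct P S) i j‖ = |β| * ∑ j, |PAct P S i j| := by
        simp only [Matrix.smul_apply, smul_eq_mul, norm_mul, Real.norm_eq_abs, Finset.mul_sum]
    _ ≤ |β| := mul_le_of_le_one_right (abs_nonneg β) sum_abs_PAct_le_one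
    _ < 1 := hβ

theorem NMat_eq_BMat_compl : NMat β P S = BMat β P Sᶜ := by
  have PPas_eq_PAct_compl : PPas P S = PAct P Sᶜ := by
    ext i k
    by_cases hi : i ∈ S <;> simp [PPas, PAct, hi]
  rw [NMat, BMat, PPas_eq_PAct_compl]

theorem BMat_row_of_mem (hi : i ∈ S) : BMat β P S i = (1 - β • P) i := by
  ext k
  simp [BMat, PAct, hi]

theorem BMat_row_of_notMem (hi : i ∉ S) : BMat β P S i = (1 - β) • Pi.single i 1 := by
  ext k
  rcases eq_or_ne i k with rfl | hik
  · simp [BMat, PAct, hi]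
  · simp [BMat, PAct, hi, hik, hik.symm]

theorem NMat_row_of_mem (hi : i ∈ S) : NMat β P S i = (1 - β) • Pi.single i 1 := by
  rw [NMat_eq_BMat_compl, BMat_row_of_notMem (by simpa using hi)]

theorem NMat_row_of_notMem (hi : i ∉ S) : NMat β P S i = (1 - β • P) i := by
  rw [NMat_eq_BMat_compl, BMat_row_of_mem (by simpa using hi)]

theorem BMat_insert (hj : j ∉ S) :
    BMat β P (insert j S) = (BMat β P S).updateRow j (NMat β P S j) := by
  funext i
  rcases eq_or_ne i j with rfl | hij
  · rw [updateRow_self, BMat_row_of_mem (Finset.mem_insert_self i S), NMat_row_of_notMem hj]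
  · rw [updateRow_ne hij]
    by_cases hi : i ∈ S
    · rw [BMat_row_of_mem hi, BMat_row_of_mem (Finset.mem_insert_of_mem hi)]
    · rw [BMat_row_of_notMem hi, BMat_row_of_notMem (by simp [hij, hi])]

theorem NMat_insert (hj : j ∉ S) :
    NMat β P (insert j S) = (NMat β P S).updateRow j (BMat β P S j) := by
  funext i
  rcases eq_or_ne i j with rfl | hij
  · rw [updateRow_self, NMat_row_of_mem (Finset.mem_insert_self i S), BMat_row_of_notMem hj]
  · rw [updateRow_ne hij]
    by_cases hi : i ∈ S
    · rw [NMat_row_of_mem hi, NMat_row_of_mem (Finset.mem_insert_of_mem hi)]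
    · rw [NMat_row_of_notMem hi, NMat_row_of_notMem (by simp [hij, hi])]

theorem NMat_insert_mulVec_of_ne (hj : j ∉ S) (hij : i ≠ j) (v : N → ℝ) :
    (NMat β P (insert j S) *ᵥ v) i = (NMat β P S *ᵥ v) i := by
  rw [NMat_insert hj, updateRow_mulVec, Function.update_of_ne hij]

theorem det_BMat_insert (hB : IsUnit (BMat β P S).det) (hj : j ∉ S) :
    (BMat β P (insert j S)).det = (BMat β P S).det * AMat β P S j j := by
  rw [BMat_insert hj, det_updateRow_eq_det_mul_vecMul_inv hB, AMat, HMat, mul_apply_eq_vecMul]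

theorem AMat_self_ne_zero (hB : IsUnit (BMat β P S).det)
    (hB' : IsUnit (BMat β P (insert j S)).det) (hj : j ∉ S) : AMat β P S j j ≠ 0 :=
  right_ne_zero_of_mul (det_BMat_insert hB hj ▸ hB'.ne_zero)

end Tableau

section MarginalReward

variable {N : Type*} [Fintype N] [DecidableEq N] {P : Matrix N N ℝ} {β : ℝ} {S : Finset N}
  {i j : N} {R : N → ℝ}

theorem BMat_mulVec_fRew (hB : IsUnit (BMat β P S).det) :
    BMat β P S *ᵥ fRew β P R S = fun k => if k ∈ S then R k else 0 := by
  rw [fRew, HMat, mulVec_mulVec, mul_nonsing_inv _ hB, one_mulVec]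

theorem fRew_of_notMem (hB : IsUnit (BMat β P S).det) (hi : i ∉ S) : fRew β P R S i = 0 := by
  have hβ : 1 - β ≠ 0 := fun h => hB.ne_zero <|
    det_eq_zero_of_row_eq_zero i fun k => by
      rw [BMat_row_of_notMem hi, h, zero_smul, Pi.zero_apply]
  have row_eq : (1 - β) * fRew β P R S i = 0 := by
    calc (1 - β) * fRew β P R S i = (BMat β P S *ᵥ fRew β P R S) i := by
          rw [mulVec, BMat_row_of_notMem hi, smul_dotProduct, single_one_dotProduct, smul_eq_mul]
      _ = 0 := by simp only [BMat_mulVec_fRew hB, if_neg hi]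
  exact (mul_eq_zero.1 row_eq).resolve_left hβ

theorem rMarg_of_mem (hi : i ∈ S) :
    rMarg β P R S i = (NMat β P S *ᵥ fRew β P R S) i := by
  rw [rMarg, if_pos hi, mulVec, NMat_row_of_mem hi, smul_dotProduct, single_one_dotProduct,
    smul_eq_mul]

theorem rMarg_of_notMem (hB : IsUnit (BMat β P S).det) (hi : i ∉ S) :
    rMarg β P R S i = R i - (NMat β P S *ᵥ fRew β P R S) i := by
  have sum_eq : ∑ k ∈ S, P i k * fRew β P R S k = (P *ᵥ fRew β P R S) i :=
    Finset.sum_subset (Finset.subset_univ S) fun k _ hk => by rw [fRew_of_notMem hB hk, mul_zero]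
  have row_eq : (NMat β P S *ᵥ fRew β P R S) i = ((1 - β • P) *ᵥ fRew β P R S) i := by
    rw [mulVec, mulVec, NMat_row_of_notMem hi]
  rw [rMarg, if_neg hi, sum_eq, row_eq, sub_mulVec, one_mulVec, smul_mulVec, Pi.sub_apply,
    Pi.smul_apply, fRew_of_notMem hB hi, smul_eq_mul]
  ring

theorem fRew_insert (hB : IsUnit (BMat β P S).det)
    (hB' : IsUnit (BMat β P (insert j S)).det) (hj : j ∉ S) :
    fRew β P R (insert j S) =
      fRew β P R S + (rMarg β P R S j / AMat β P S j j) • (HMat β P S).col j := by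
  have reward_insert : (fun k => if k ∈ insert j S then R k else 0) =
      Function.update (fun k => if k ∈ S then R k else 0) j (R j) := by
    ext k
    rcases eq_or_ne k j with rfl | hkj
    · simp
    · simp [hkj]
  rw [BMat_insert hj] at hB'
  rw [fRew, HMat, BMat_insert hj, reward_insert, updateRow_inv_mulVec_update hB hB',
    rMarg_of_notMem hB hj]
  rfl

theorem NMat_mulVec_fRew_insert (hB : IsUnit (BMat β P S).det)
    (hB' : IsUnit (BMat β P (insert j S)).det) (hj : j ∉ S) :
    NMat β P S *ᵥ fRew β P R (insert j S) =
      NMat β P S *ᵥ fRew β P R S + (rMarg β P R S j / AMat β P S j j) • (AMat β P S).col j := by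
  rw [fRew_insert hB hB' hj, mulVec_add, mulVec_smul, ← mulVec_single_one (HMat β P S),
    mulVec_mulVec, ← AMat, mulVec_single_one]

theorem rMarg_insert_of_mem (hB : IsUnit (BMat β P S).det)
    (hB' : IsUnit (BMat β P (insert j S)).det) (hj : j ∉ S) (hi : i ∈ S) :
    rMarg β P R (insert j S) i =
      rMarg β P R S i + (rMarg β P R S j / AMat β P S j j) * AMat β P S i j := by
  rw [rMarg_of_mem (Finset.mem_insert_of_mem hi),
    NMat_insert_mulVec_of_ne hj (ne_of_mem_of_not_mem hi hj), NMat_mulVec_fRew_insert hB hB' hj,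
    rMarg_of_mem hi]
  rfl

theorem rMarg_insert_self (hB : IsUnit (BMat β P S).det)
    (hB' : IsUnit (BMat β P (insert j S)).det) (hj : j ∉ S) :
    rMarg β P R (insert j S) j = rMarg β P R S j / AMat β P S j j := by
  set c := rMarg β P R S j / AMat β P S j j
  have BMat_mulVec_col : BMat β P S *ᵥ (HMat β P S).col j = Pi.single j 1 := by
    rw [← mulVec_single_one, HMat, mulVec_mulVec, mul_nonsing_inv _ hB, one_mulVec]
  calc rMarg β P R (insert j S) j
      = (NMat β P (insert j S) *ᵥ fRew β P R (insert j S)) j :=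
        rMarg_of_mem (Finset.mem_insert_self j S)
    _ = (BMat β P S *ᵥ fRew β P R (insert j S)) j := by
        rw [NMat_insert hj, updateRow_mulVec, Function.update_self, mulVec]
    _ = (BMat β P S *ᵥ fRew β P R S + c • Pi.single j (1 : ℝ) : N → ℝ) j := by
        rw [fRew_insert hB hB' hj, mulVec_add, mulVec_smul, BMat_mulVec_col]
    _ = c := by
        rw [BMat_mulVec_fRew hB]
        simp [hj]

theorem rMarg_insert_of_notMem (hB : IsUnit (BMat β P S).det)
    (hB' : IsUnit (BMat β P (insert j S)).det) (hj : j ∉ S) (hi : i ∉ insert j S) :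
    rMarg β P R (insert j S) i =
      rMarg β P R S i - (rMarg β P R S j / AMat β P S j j) * AMat β P S i j := by
  obtain ⟨hij, hiS⟩ : i ≠ j ∧ i ∉ S := by simpa using hi
  rw [rMarg_of_notMem hB' hi, NMat_insert_mulVec_of_ne hj hij, NMat_mulVec_fRew_insert hB hB' hj,
    rMarg_of_notMem hB hiS, sub_sub]
  rfl

theorem wMarg_eq_rMarg_one (β : ℝ) (P : Matrix N N ℝ) : wMarg β P = rMarg β P 1 := rfl

end MarginalReward

theorem stmt12_general {N : Type*} [Fintype N] [DecidableEq N]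
    (P : Matrix N N ℝ) (β : ℝ) (R : N → ℝ) (S : Finset N) (j : N) (hj : j ∉ S)
    (hB : IsUnit (BMat β P S).det) (hB' : IsUnit (BMat β P (insert j S)).det) :
    AMat β P S j j ≠ 0 ∧
    (∀ i ∈ S, wMarg β P (insert j S) i
        = wMarg β P S i + (wMarg β P S j / AMat β P S j j) * AMat β P S i j) ∧
    wMarg β P (insert j S) j = wMarg β P S j / AMat β P S j j ∧
    (∀ i, i ∉ insert j S → wMarg β P (insert j S) i
        = wMarg β P S i - (wMarg β P S j / AMat β P S j j) * AMat β P S i j) ∧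
    (∀ i ∈ S, rMarg β P R (insert j S) i
        = rMarg β P R S i + (rMarg β P R S j / AMat β P S j j) * AMat β P S i j) ∧
    rMarg β P R (insert j S) j = rMarg β P R S j / AMat β P S j j ∧
    (∀ i, i ∉ insert j S → rMarg β P R (insert j S) i
        = rMarg β P R S i - (rMarg β P R S j / AMat β P S j j) * AMat β P S i j) := by
  rw [wMarg_eq_rMarg_one]
  exact ⟨AMat_self_ne_zero hB hB' hj,
    fun _ => rMarg_insert_of_mem hB hB' hj,
    rMarg_insert_self hB hB' hj,
    fun _ => rMarg_insert_of_notMem hB hB' hj,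
    fun _ => rMarg_insert_of_mem hB hB' hj,
    rMarg_insert_self hB hB' hj,
    fun _ => rMarg_insert_of_notMem hB hB' hj⟩

/-- Table 4: the pivot-update formulas for the marginal workloads and
marginal rewards. -/
theorem stmt12 {N : Type*} [Fintype N] [DecidableEq N] [Nonempty N]
    (P : Matrix N N ℝ) (hP0 : ∀ i j, 0 ≤ P i j) (hP1 : ∀ i, ∑ j, P i j = 1)
    (β : ℝ) (hβ0 : 0 < β) (hβ1 : β < 1) (R : N → ℝ)
    (S : Finset N) (j : N) (hj : j ∉ S) :
    AMat β P S j j ≠ 0 ∧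
    (∀ i ∈ S, wMarg β P (insert j S) i
        = wMarg β P S i + (wMarg β P S j / AMat β P S j j) * AMat β P S i j) ∧
    wMarg β P (insert j S) j = wMarg β P S j / AMat β P S j j ∧
    (∀ i, i ∉ insert j S → wMarg β P (insert j S) i
        = wMarg β P S i - (wMarg β P S j / AMat β P S j j) * AMat β P S i j) ∧
    (∀ i ∈ S, rMarg β P R (insert j S) i
        = rMarg β P R S i + (rMarg β P R S j / AMat β P S j j) * AMat β P S i j) ∧
    rMarg β P R (insert j S) j = rMarg β P R S j / AMat β P S j j ∧
    (∀ i, i ∉ insert j S → rMarg β P R (insert j S) i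
        = rMarg β P R S i - (rMarg β P R S j / AMat β P S j j) * AMat β P S i j) := by
  have hB : ∀ U, IsUnit (BMat β P U).det :=
    isUnit_det_BMat (fun i => by simp only [abs_of_nonneg (hP0 i _), hP1, le_refl])
      (by rwa [abs_of_pos hβ0])
  exact stmt12_general P β R S j hj (hB S) (hB (insert j S))
end
end

section
/- Fix S ⊆ N. The submatrix I_S − β P_{SS} (rows and columns indexed by S) is invertible, and the basis inverse H^S = (B^S)⁻¹ has the block form: H^S restricted to S×S equals (I_S − β P_{SS})⁻¹; H^S restricted to S×S^c equals (β/(1−β)) (I_S − β P_{SS})⁻¹ P_{S S^c}; H^S restricted to S^c×S equals the zero matrix; and H^S restricted to S^c×S^c equals (1/(1−β)) I_{S^c}. (Equation (19) of the paper.) -/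
open Matrix BigOperators
open scoped Classical

noncomputable section

/-- Submatrix of `P` with rows and columns indexed by `S`. -/
def Psub {N : Type*} (P : Matrix N N ℝ) (S : Finset N) :
    Matrix {x // x ∈ S} {x // x ∈ S} ℝ := fun a b => P a.1 b.1

/-! Listing the states of `S` first makes `B^S` block upper triangular, with diagonal blocks
`I - β P_{SS}` and `(1 - β) I`: a state outside `S` is absorbing under `P^S`. The first block is
invertible because the absolute row sums of `β P_{SS}` are below one, so `I - β P_{SS}` is strictly
diagonally dominant; inverting the triangular matrix blockwise gives `H^S`. -/

theorem sum_abs_mul_lt_one {ι R : Type*} [Fintype ι] [Ring R] [LinearOrder R]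
    [IsStrictOrderedRing R] {f : ι → R} {c : R} (hf : ∀ i, 0 ≤ f i)
    (hsum : ∑ i, f i ≤ 1) (hc : |c| < 1) (s : Finset ι) : ∑ i ∈ s, |c * f i| < 1 :=
  calc ∑ i ∈ s, |c * f i| = |c| * ∑ i ∈ s, f i := by
        simp only [abs_mul, abs_of_nonneg (hf _), Finset.mul_sum]
    _ ≤ |c| * 1 := by
        gcongr
        exact (Finset.sum_le_univ_sum_of_nonneg hf).trans hsum
    _ < 1 := by rwa [mul_one]

theorem isUnit_one_sub_of_sum_row_norm_lt_one {n K : Type*} [Fintype n] [DecidableEq n]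
    [NormedField K] {A : Matrix n n K} (hA : ∀ i, ∑ j, ‖A i j‖ < 1) : IsUnit (1 - A) := by
  rw [isUnit_iff_isUnit_det, isUnit_iff_ne_zero]
  refine det_ne_zero_of_sum_row_lt_diag fun i => ?_
  have hoff : ∑ j ∈ Finset.univ.erase i, ‖(1 - A) i j‖ =
      ∑ j ∈ Finset.univ.erase i, ‖A i j‖ :=
    Finset.sum_congr rfl fun j hj => by
      rw [Matrix.sub_apply, one_apply_ne (Finset.ne_of_mem_erase hj).symm, zero_sub, norm_neg]
  calc ∑ j ∈ Finset.univ.erase i, ‖(1 - A) i j‖ < 1 - ‖A i i‖ := by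
        rw [hoff, lt_sub_iff_add_lt, Finset.sum_erase_add _ _ (Finset.mem_univ i)]
        exact hA i
    _ ≤ ‖(1 - A) i i‖ := by
        rw [Matrix.sub_apply, one_apply_eq]
        simpa only [norm_one] using norm_sub_norm_le 1 (A i i)

theorem inv_fromBlocks_zero₂₁_smul_one {m n K : Type*} [Fintype m] [DecidableEq m] [Fintype n]
    [DecidableEq n] [Field K] {A : Matrix m m K} {B : Matrix m n K} {d : K} (hd : d ≠ 0)
    (hA : IsUnit A) :
    (fromBlocks A B 0 (d • (1 : Matrix n n K)))⁻¹ =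
      fromBlocks A⁻¹ (-(d⁻¹ • (A⁻¹ * B))) 0 (d⁻¹ • 1) := by
  have hD : (d • 1) * (d⁻¹ • 1) = (1 : Matrix n n K) := by
    rw [smul_mul_smul_comm, mul_one, mul_inv_cancel₀ hd, one_smul]
  rw [inv_fromBlocks_zero₂₁_of_isUnit_iff _ _ _ (iff_of_true hA (.of_mul_eq_one _ hD)),
    inv_eq_right_inv hD, Matrix.mul_smul, Matrix.mul_one]

section BlockForm

variable {N : Type*} [DecidableEq N] {P : Matrix N N ℝ} {β : ℝ} {S : Finset N}

theorem isUnit_one_sub_smul_Psub (hP : ∀ i ∈ S, ∑ j ∈ S, |β * P i j| < 1) :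
    IsUnit (1 - β • Psub P S) :=
  isUnit_one_sub_of_sum_row_norm_lt_one fun i =>
    (Finset.sum_coe_sort S fun j => |β * P i j|).trans_lt (hP i i.2)

variable [Fintype N]

variable (P β S) in
theorem BMat_submatrix_sumCompl :
    (BMat β P S).submatrix (Equiv.sumCompl (· ∈ S)) (Equiv.sumCompl (· ∈ S)) =
      fromBlocks (1 - β • Psub P S) (-(β • P.toBlock (· ∈ S) (· ∉ S))) 0 ((1 - β) • 1) := by
  ext (i | i) (j | j)
  · simp [BMat, PAct, Psub, one_apply]
  · simp [BMat, PAct, one_apply_ne (ne_of_mem_of_not_mem i.2 j.2)]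
  · simp [BMat, PAct, i.2, (ne_of_mem_of_not_mem j.2 i.2).symm]
  · simp [BMat, PAct, i.2, one_apply, Subtype.coe_inj, ite_sub_ite]

theorem HMat_submatrix_sumCompl (hβ : β ≠ 1) (hA : IsUnit (1 - β • Psub P S)) :
    (HMat β P S).submatrix (Equiv.sumCompl (· ∈ S)) (Equiv.sumCompl (· ∈ S)) =
      fromBlocks (1 - β • Psub P S)⁻¹
        ((β / (1 - β)) • ((1 - β • Psub P S)⁻¹ * P.toBlock (· ∈ S) (· ∉ S)))
        0 ((1 / (1 - β)) • 1) := by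
  rw [HMat, ← inv_submatrix_equiv, BMat_submatrix_sumCompl,
    inv_fromBlocks_zero₂₁_smul_one (sub_ne_zero.2 hβ.symm) hA, Matrix.mul_neg, smul_neg, neg_neg,
    Matrix.mul_smul, smul_smul, inv_mul_eq_div, one_div]

theorem stmt13_general (hβ : β ≠ 1) (hP : ∀ i ∈ S, ∑ j ∈ S, |β * P i j| < 1) :
    IsUnit (1 - β • Psub P S) ∧
    (∀ a b : {x // x ∈ S}, HMat β P S a.1 b.1 = ((1 - β • Psub P S)⁻¹) a b) ∧
    (∀ (a : {x // x ∈ S}) (j : N), j ∉ S →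
        HMat β P S a.1 j
          = (β / (1 - β)) * ∑ k : {x // x ∈ S}, ((1 - β • Psub P S)⁻¹) a k * P k.1 j) ∧
    (∀ i : N, i ∉ S → ∀ b : {x // x ∈ S}, HMat β P S i b.1 = 0) ∧
    (∀ i j : N, i ∉ S → j ∉ S → HMat β P S i j = if i = j then 1 / (1 - β) else 0) := by
  have hA := isUnit_one_sub_smul_Psub hP
  have hH := congr_fun₂ (HMat_submatrix_sumCompl hβ hA)
  refine ⟨hA, fun a b => hH (.inl a) (.inl b), fun a j hj => hH (.inl a) (.inr ⟨j, hj⟩),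
    fun i hi b => hH (.inr ⟨i, hi⟩) (.inl b), fun i j hi hj => ?_⟩
  simpa [one_apply] using hH (.inr ⟨i, hi⟩) (.inr ⟨j, hj⟩)

end BlockForm

/-- equation (19): block form of the basis inverse `H^S`. -/
theorem stmt13 {N : Type*} [Fintype N] [DecidableEq N] [Nonempty N]
    (P : Matrix N N ℝ) (hP0 : ∀ i j, 0 ≤ P i j) (hP1 : ∀ i, ∑ j, P i j = 1)
    (β : ℝ) (hβ0 : 0 < β) (hβ1 : β < 1) (S : Finset N) :
    IsUnit ((1 : Matrix {x // x ∈ S} {x // x ∈ S} ℝ) - β • Psub P S) ∧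
    (∀ a b : {x // x ∈ S},
        HMat β P S a.1 b.1 = ((1 - β • Psub P S)⁻¹) a b) ∧
    (∀ (a : {x // x ∈ S}) (j : N), j ∉ S →
        HMat β P S a.1 j
          = (β / (1 - β)) * ∑ k : {x // x ∈ S}, ((1 - β • Psub P S)⁻¹) a k * P k.1 j) ∧
    (∀ i : N, i ∉ S → ∀ b : {x // x ∈ S}, HMat β P S i b.1 = 0) ∧
    (∀ i j : N, i ∉ S → j ∉ S →
        HMat β P S i j = if i = j then 1 / (1 - β) else 0) :=
  stmt13_general hβ1.ne fun i _ =>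
    sum_abs_mul_lt_one (hP0 i) (hP1 i).le (abs_lt.2 ⟨by linarith, hβ1⟩) S
end
end

section
/- Fix S ⊆ N and suppose a : N → ℝ satisfies a_i = β R_i + β Σ_{j∈S} P_{ij} a_j for all i ∈ N. Then a_i = β r_i^S / (1−β) for every i ∈ S, and a_i = β r_i^S for every i ∉ S. (The relation between the quantities computed in the Varaiya–Walrand–Buyukkoc algorithm and the marginal rewards; taking R ≡ 1 gives the analogous relation between the quantities b and the marginal workloads w.) -/
open Matrix BigOperators
open scoped Classical

noncomputable section

/-!
The marginal reward is linear in the reward, so `β r^S` is the marginal reward for the reward `β R`.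
It therefore suffices to treat a solution of `v_i = R_i + β ∑_{j ∈ S} P_{ij} v_j`. On `S` these
equations say `B^S (v·1_S) = R·1_S`, hence `v·1_S = f^S` as `B^S` is invertible. Substituting this
in the definition of `r^S` gives `r_i^S = (1 - β) v_i` on `S` and `r_i^S = v_i` off `S`. For `P`
substochastic and `|β| < 1`, strict diagonal dominance makes `B^S` invertible.
-/

theorem isUnit_one_sub_smul_of_sum_norm_le_one {n 𝕜 : Type*} [Fintype n] [DecidableEq n]
    [NormedField 𝕜] {A : Matrix n n 𝕜} {c : 𝕜} (hA : ∀ i, ∑ j, ‖A i j‖ ≤ 1) (hc : ‖c‖ < 1) :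
    IsUnit (1 - c • A) := by
  rw [Matrix.isUnit_iff_isUnit_det, isUnit_iff_ne_zero]
  refine det_ne_zero_of_sum_row_lt_diag fun i ↦ ?_
  have hsum := hA i
  rw [← Finset.add_sum_erase _ _ (Finset.mem_univ i)] at hsum
  calc ∑ j ∈ Finset.univ.erase i, ‖(1 - c • A) i j‖
      = ‖c‖ * ∑ j ∈ Finset.univ.erase i, ‖A i j‖ := by
        rw [Finset.mul_sum]
        refine Finset.sum_congr rfl fun j hj ↦ ?_
        simp [one_apply_ne' (Finset.ne_of_mem_erase hj)]
    _ ≤ ‖c‖ * (1 - ‖A i i‖) := by gcongr; linarith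
    _ < 1 - ‖c * A i i‖ := by rw [norm_mul]; linarith
    _ ≤ ‖(1 - c • A) i i‖ := by simpa using norm_sub_norm_le (1 : 𝕜) (c * A i i)

section EvaluationEquations

variable {N : Type*} [Fintype N] [DecidableEq N] {β : ℝ} {P : Matrix N N ℝ} {S : Finset N}

theorem sum_norm_PAct_le_one (hP : ∀ i ∈ S, ∑ j, ‖P i j‖ ≤ 1) (i : N) :
    ∑ j, ‖PAct P S i j‖ ≤ 1 := by
  by_cases hi : i ∈ S
  · simpa only [PAct, if_pos hi] using hP i hi
  · simp [PAct, hi, apply_ite norm]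

theorem isUnit_BMat (hP : ∀ i ∈ S, ∑ j, ‖P i j‖ ≤ 1) (hβ : ‖β‖ < 1) : IsUnit (BMat β P S) :=
  isUnit_one_sub_smul_of_sum_norm_le_one (sum_norm_PAct_le_one hP) hβ

theorem PAct_mulVec_piecewise_zero (x : N → ℝ) :
    PAct P S *ᵥ S.piecewise x 0 = S.piecewise (fun i ↦ ∑ j ∈ S, P i j * x j) 0 := by
  ext i
  by_cases hi : i ∈ S <;> simp [mulVec, dotProduct, PAct, Finset.piecewise, hi]

theorem BMat_mulVec_piecewise_zero (x : N → ℝ) :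
    BMat β P S *ᵥ S.piecewise x 0 =
      S.piecewise (fun i ↦ x i - β * ∑ j ∈ S, P i j * x j) 0 := by
  rw [BMat, sub_mulVec, one_mulVec, smul_mulVec, PAct_mulVec_piecewise_zero]
  ext i
  by_cases hi : i ∈ S <;> simp [hi]

theorem fRew_smul (c : ℝ) (R : N → ℝ) : fRew β P (c • R) S = c • fRew β P R S := by
  rw [fRew, fRew, ← mulVec_smul]
  congr 1
  ext i
  simp

theorem rMarg_smul (c : ℝ) (R : N → ℝ) : rMarg β P (c • R) S = c • rMarg β P R S := by
  ext i
  simp only [rMarg, fRew_smul, Pi.smul_apply, smul_eq_mul, mul_left_comm _ c, ← Finset.mul_sum,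
    ← mul_add, mul_ite]

theorem fRew_eq_piecewise (hB : IsUnit (BMat β P S)) {R v : N → ℝ}
    (hv : ∀ i ∈ S, v i = R i + β * ∑ j ∈ S, P i j * v j) :
    fRew β P R S = S.piecewise v 0 := by
  have hR : BMat β P S *ᵥ S.piecewise v 0 = S.piecewise R 0 := by
    rw [BMat_mulVec_piecewise_zero]
    exact S.piecewise_congr (fun i hi ↦ sub_eq_of_eq_add (hv i hi)) fun _ _ ↦ rfl
  let := hB.invertible
  exact inv_mulVec_eq_vec hR.symm

theorem rMarg_eq_one_sub_mul_of_mem (hB : IsUnit (BMat β P S)) {R v : N → ℝ}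
    (hv : ∀ i ∈ S, v i = R i + β * ∑ j ∈ S, P i j * v j) {i : N} (hi : i ∈ S) :
    rMarg β P R S i = (1 - β) * v i := by
  rw [rMarg, if_pos hi, fRew_eq_piecewise hB hv, S.piecewise_eq_of_mem _ _ hi]

theorem rMarg_eq_add_sum_of_notMem (hB : IsUnit (BMat β P S)) {R v : N → ℝ}
    (hv : ∀ i ∈ S, v i = R i + β * ∑ j ∈ S, P i j * v j) {i : N} (hi : i ∉ S) :
    rMarg β P R S i = R i + β * ∑ j ∈ S, P i j * v j := by
  rw [rMarg, if_neg hi, fRew_eq_piecewise hB hv]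
  congr 2
  exact Finset.sum_congr rfl fun j hj ↦ by rw [S.piecewise_eq_of_mem _ _ hj]

theorem stmt16_general (hB : IsUnit (BMat β P S)) (hβ : β ≠ 1) {R a : N → ℝ}
    (ha : ∀ i, a i = β * R i + β * ∑ j ∈ S, P i j * a j) :
    (∀ i ∈ S, a i = β * rMarg β P R S i / (1 - β)) ∧
    (∀ i ∉ S, a i = β * rMarg β P R S i) := by
  have hsmul (i : N) : rMarg β P (β • R) S i = β * rMarg β P R S i :=
    congrFun (rMarg_smul β R) i
  have hv : ∀ i ∈ S, a i = (β • R) i + β * ∑ j ∈ S, P i j * a j := fun i _ ↦ ha i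
  constructor <;> intro i hi <;> rw [← hsmul]
  · rw [rMarg_eq_one_sub_mul_of_mem hB hv hi, mul_div_cancel_left₀ _ (sub_ne_zero.mpr hβ.symm)]
  · rw [rMarg_eq_add_sum_of_notMem hB hv hi]
    exact ha i

end EvaluationEquations

/-- relation between the quantities computed in the
Varaiya–Walrand–Buyukkoc algorithm and the marginal rewards. -/
theorem stmt16 {N : Type*} [Fintype N] [DecidableEq N] [Nonempty N]
    (P : Matrix N N ℝ) (hP0 : ∀ i j, 0 ≤ P i j) (hP1 : ∀ i, ∑ j, P i j = 1)
    (β : ℝ) (hβ0 : 0 < β) (hβ1 : β < 1) (R : N → ℝ)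
    (S : Finset N) (a : N → ℝ)
    (ha : ∀ i, a i = β * R i + β * ∑ j ∈ S, P i j * a j) :
    (∀ i ∈ S, a i = β * rMarg β P R S i / (1 - β)) ∧
    (∀ i ∉ S, a i = β * rMarg β P R S i) :=
  stmt16_general (isUnit_BMat (fun i _ ↦ by simp [abs_of_nonneg, hP0, hP1])
    (by rwa [Real.norm_of_nonneg hβ0.le])) hβ1.ne ha
end
end
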